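/- Let μ₀, μ₁ ∈ 𝒫₂(X) and t ∈ (0,1). The set ℐ_t(μ₀,μ₁) of t-intermediate points, consisting of ν ∈ 𝒫₂(X) with W₂(μ₀,ν) = t·W₂(μ₀,μ₁) and W₂(μ₁,ν) = (1−t)·W₂(μ₀,μ₁), is a convex and closed subset of (𝒫₂(X), W₂). -/

import Mathlib

open MeasureTheory Set Filter Topology ENNReal

variable {X : Type*} [MetricSpace X] [MeasurableSpace X] [BorelSpace X]

/-- `π` is a transport plan (coupling) between `μ` and `ν`. -/
def IsCoupling (π : Measure (X × X)) (μ ν : Measure X) : Prop :=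
  π.map Prod.fst = μ ∧ π.map Prod.snd = ν

/-- Squared quadratic optimal transport cost. -/
noncomputable def W2sq (μ ν : Measure X) : ℝ≥0∞ :=
  ⨅ (π : Measure (X × X)) (_ : IsCoupling π μ ν),
    ∫⁻ p, ENNReal.ofReal (dist p.1 p.2 ^ 2) ∂π

/-- Quadratic Wasserstein distance (`ℝ≥0∞`-valued). -/
noncomputable def W2 (μ ν : Measure X) : ℝ≥0∞ := W2sq μ ν ^ (1/2 : ℝ)

/-- `μ` has finite second moment with base point `x₀`. -/
def FiniteSecondMoment (μ : Measure X) (x₀ : X) : Prop :=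
  ∫⁻ x, ENNReal.ofReal (dist x₀ x ^ 2) ∂μ < ⊤

/-- `μ ∈ 𝒫₂(X)`: a Borel probability measure with finite second moment. -/
def InP2 (μ : Measure X) (x₀ : X) : Prop :=
  IsProbabilityMeasure μ ∧ FiniteSecondMoment μ x₀

/-- The set `ℐ_t(μ₀,μ₁)` of `t`-intermediate points between `μ₀` and `μ₁`. -/
def InterPoints (t : ℝ) (μ₀ μ₁ : Measure X) (x₀ : X) : Set (Measure X) :=
  {ν | InP2 ν x₀ ∧ W2 μ₀ ν = ENNReal.ofReal t * W2 μ₀ μ₁ ∧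
        W2 μ₁ ν = ENNReal.ofReal (1 - t) * W2 μ₀ μ₁}

/-- The (lower) `L²` norm of an arbitrary function. -/
noncomputable def lowN {α : Type*} [MeasurableSpace α] (m : Measure α) (f : α → ℝ≥0∞) : ℝ≥0∞ :=
  (∫⁻ a, f a ^ (2 : ℝ) ∂m) ^ (1 / 2 : ℝ)

theorem lowN_sq {α : Type*} [MeasurableSpace α] (m : Measure α) (f : α → ℝ≥0∞) :
    lowN m f ^ (2 : ℝ) = ∫⁻ a, f a ^ (2 : ℝ) ∂m := by
  rw [lowN, ← ENNReal.rpow_mul]; norm_num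

theorem half_sq (x : ℝ≥0∞) : (x ^ (1 / 2 : ℝ)) ^ (2 : ℝ) = x := by
  rw [← ENNReal.rpow_mul]; norm_num

theorem sq_half (x : ℝ≥0∞) : (x ^ (2 : ℝ)) ^ (1 / 2 : ℝ) = x := by
  rw [← ENNReal.rpow_mul]; norm_num

theorem lowN_mono {α : Type*} [MeasurableSpace α] (m : Measure α) {f g : α → ℝ≥0∞}
    (h : ∀ a, f a ≤ g a) : lowN m f ≤ lowN m g := by
  unfold lowN
  gcongr with a
  exact h a

theorem lowN_exists {α : Type*} [MeasurableSpace α] (m : Measure α) (f : α → ℝ≥0∞) :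
    ∃ g, Measurable g ∧ (∀ a, g a ≤ f a) ∧ lowN m f = lowN m g := by
  obtain ⟨g, hg, hle, he⟩ := exists_measurable_le_lintegral_eq m (fun a => f a ^ (2 : ℝ))
  refine ⟨fun a => g a ^ (1 / 2 : ℝ), hg.pow_const _, fun a => ?_, ?_⟩
  · calc g a ^ (1 / 2 : ℝ) ≤ (f a ^ (2 : ℝ)) ^ (1 / 2 : ℝ) := by gcongr; exact hle a
      _ = f a := sq_half _
  · simp only [lowN, he, half_sq]

/-- Adding a constant: valid for non-measurable functions. -/
theorem lowN_le_add_const {α : Type*} [MeasurableSpace α] (m : Measure α) [IsProbabilityMeasure m]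
    {f a : α → ℝ≥0∞} {B : ℝ≥0∞} (h : ∀ x, f x ≤ a x + B) : lowN m f ≤ lowN m a + B := by
  obtain ⟨g, hg, hle, he⟩ := lowN_exists m f
  rw [he]
  have h1 : ∀ x, g x - B ≤ a x := fun x => tsub_le_iff_right.2 ((hle x).trans (h x))
  calc lowN m g ≤ lowN m ((fun x => g x - B) + fun _ => B) :=
        lowN_mono m fun x => le_tsub_add
    _ ≤ lowN m (fun x => g x - B) + lowN m (fun _ => B) :=
        ENNReal.lintegral_Lp_add_le (hg.sub_const B).aemeasurable aemeasurable_const (by norm_num)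
    _ = lowN m (fun x => g x - B) + B := by
        congr 1; simp only [lowN, lintegral_const, measure_univ, mul_one, sq_half]
    _ ≤ lowN m a + B := by gcongr; exact lowN_mono m h1

theorem lowN_prod_le {α β : Type*} [MeasurableSpace α] [MeasurableSpace β]
    (P : Measure α) (Q : Measure β) [IsProbabilityMeasure P] [IsProbabilityMeasure Q]
    {h : α × β → ℝ≥0∞} (hh : Measurable h) {a : α → ℝ≥0∞} {b : β → ℝ≥0∞}
    (hle : ∀ s t, h (s, t) ≤ a s + b t) : lowN (P.prod Q) h ≤ lowN P a + lowN Q b := by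
  have h1 : ∀ s, lowN Q (fun t => h (s, t)) ≤ a s + lowN Q b := fun s => by
    rw [add_comm]
    exact lowN_le_add_const Q fun t => by rw [add_comm]; exact hle s t
  have h2 : lowN (P.prod Q) h = lowN P (fun s => lowN Q (fun t => h (s, t))) := by
    simp only [lowN, half_sq]
    rw [lintegral_prod _ (hh.pow_const _).aemeasurable]
  rw [h2]
  exact lowN_le_add_const P h1

theorem measurable_usc_family {ι : Type*} [MeasurableSpace ι] [DiscreteMeasurableSpace ι]
    (w : ι → ℝ → NNReal) (hw : ∀ i, UpperSemicontinuous (w i)) :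
    Measurable (fun p : ι × ℝ => w p.1 p.2) := by
  apply measurable_of_Ici
  intro c
  let B := TopologicalSpace.countableBasis ℝ
  have hB : (((fun p : ι × ℝ => w p.1 p.2) ⁻¹' Ici c)ᶜ) =
      ⋃ U ∈ B, ({i | ∀ y ∈ U, w i y < c} ×ˢ U) := by
    ext ⟨i, y⟩
    simp only [mem_compl_iff, mem_preimage, mem_Ici, not_le, mem_iUnion, mem_prod, mem_ofPred_eq,
      exists_prop]
    constructor
    · intro h
      have ho : IsOpen ((w i ⁻¹' Ici c)ᶜ) := ((hw i).isClosed_preimage c).isOpen_compl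
      obtain ⟨U, hU, hyU, hUs⟩ :=
        (TopologicalSpace.isBasis_countableBasis ℝ).exists_subset_of_mem_open
          (show y ∈ (w i ⁻¹' Ici c)ᶜ by simpa using h) ho
      exact ⟨U, hU, fun z hz => by simpa using hUs hz, hyU⟩
    · rintro ⟨U, _, h, hy⟩
      exact h y hy
  rw [← MeasurableSet.compl_iff, hB]
  refine MeasurableSet.biUnion (TopologicalSpace.countable_countableBasis ℝ) fun U hU => ?_
  exact (MeasurableSet.of_discrete).prod
    (TopologicalSpace.isOpen_of_mem_countableBasis hU).measurableSet

theorem exists_usc {m : Measure ℝ} [IsProbabilityMeasure m] (g : ℝ → ℝ≥0∞) (r : ℝ≥0∞)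
    (hr : r < ∫⁻ y, g y ∂m) :
    ∃ w : ℝ → NNReal, UpperSemicontinuous w ∧ (∀ y, (w y : ℝ≥0∞) ≤ g y) ∧
      r ≤ ∫⁻ y, w y ∂m := by
  rw [lintegral_eq_nnreal] at hr
  obtain ⟨φ, hφ⟩ := lt_iSup_iff.1 hr
  obtain ⟨hφg, hφr⟩ := lt_iSup_iff.1 hφ
  have e : (SimpleFunc.map ofNNReal φ).lintegral m = ∫⁻ y, (φ y : ℝ≥0∞) ∂m := by
    rw [← SimpleFunc.lintegral_eq_lintegral]; rfl
  rw [e] at hφr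
  have hfin : ∫⁻ y, (φ y : ℝ≥0∞) ∂m ≠ ∞ := by
    obtain ⟨C, hC⟩ := φ.finite_range.bddAbove
    exact (IsFiniteMeasure.lintegral_lt_top_of_bounded_to_ennreal m
      ⟨C, fun y => by exact_mod_cast hC (mem_range_self y)⟩).ne
  obtain ⟨w, hw, husc, hle⟩ := SimpleFunc.exists_upperSemicontinuous_le_lintegral_le φ hfin
    (ε := ∫⁻ y, (φ y : ℝ≥0∞) ∂m - r) (tsub_pos_of_lt hφr).ne'
  refine ⟨w, husc, fun y => le_trans (by exact_mod_cast hw y) (hφg y), ?_⟩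
  by_contra hlt
  push Not at hlt
  have hI : ∫⁻ y, (w y : ℝ≥0∞) ∂m ≠ ∞ := hlt.ne_top
  have : ∫⁻ y, (w y : ℝ≥0∞) ∂m + (∫⁻ y, (φ y : ℝ≥0∞) ∂m - r) < ∫⁻ y, (φ y : ℝ≥0∞) ∂m := by
    calc _ < r + (∫⁻ y, (φ y : ℝ≥0∞) ∂m - r) :=
          ENNReal.add_lt_add_right (ne_top_of_le_ne_top hfin tsub_le_self) hlt
      _ = _ := add_tsub_cancel_of_le hφr.le
  exact absurd hle (not_le.2 this)

open ProbabilityTheory in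
theorem lintegral_lintegral_le {ι : Type*} [MeasurableSpace ι] [DiscreteMeasurableSpace ι]
    (l : Measure ι) [IsProbabilityMeasure l] (κ : Kernel ι ℝ) [IsMarkovKernel κ]
    (g : ι → ℝ → ℝ≥0∞) :
    ∫⁻ i, ∫⁻ y, g i y ∂(κ i) ∂l ≤ ∫⁻ p, g p.1 p.2 ∂(l.compProd κ) := by
  have H : ∀ (i : ι) (q : ℚ), ∃ w : ℝ → NNReal, UpperSemicontinuous w ∧
      (∀ y, (w y : ℝ≥0∞) ≤ g i y) ∧
      ((((q : ℝ).toNNReal : NNReal) : ℝ≥0∞) < ∫⁻ y, g i y ∂(κ i) →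
        (((q : ℝ).toNNReal : NNReal) : ℝ≥0∞) ≤ ∫⁻ y, w y ∂(κ i)) := by
    intro i q
    by_cases hq : (((q : ℝ).toNNReal : NNReal) : ℝ≥0∞) < ∫⁻ y, g i y ∂(κ i)
    · obtain ⟨w, h1, h2, h3⟩ := exists_usc (g i) _ hq
      exact ⟨w, h1, h2, fun _ => h3⟩
    · exact ⟨fun _ => 0, upperSemicontinuous_const, fun y => by simp, fun h => absurd h hq⟩
  choose w hw1 hw2 hw3 using H
  have hm : Measurable (fun p : ι × ℝ => ⨆ q : ℚ, (w p.1 q p.2 : ℝ≥0∞)) :=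
    Measurable.iSup fun q =>
      (measurable_usc_family (fun i => w i q) (fun i => hw1 i q)).coe_nnreal_ennreal
  calc ∫⁻ i, ∫⁻ y, g i y ∂(κ i) ∂l
      ≤ ∫⁻ i, ∫⁻ y, ⨆ q : ℚ, (w i q y : ℝ≥0∞) ∂(κ i) ∂l := by
        refine lintegral_mono fun i => ?_
        refine le_of_forall_lt fun r hr => ?_
        obtain ⟨q, _, h1, h2⟩ := ENNReal.lt_iff_exists_rat_btwn.1 hr
        refine h1.trans_le ((hw3 i q h2).trans ?_)
        refine lintegral_mono fun y => ?_
        exact le_iSup (fun q => (w i q y : ℝ≥0∞)) q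
    _ = ∫⁻ p, ⨆ q : ℚ, (w p.1 q p.2 : ℝ≥0∞) ∂(l.compProd κ) :=
        (Measure.lintegral_compProd hm).symm
    _ ≤ _ := by
        gcongr with p
        exact iSup_le fun q => hw2 _ _ _

/-- Discretization of a metric space. -/
theorem exists_discretization {X : Type*} [MetricSpace X] [MeasurableSpace X] [BorelSpace X]
    (ε : ℝ) (hε : 0 < ε) :
    ∃ f : X → X, (∀ x, dist x (f x) < ε) ∧ ∀ S : Set X, MeasurableSet (f ⁻¹' S) := by
  classical
  obtain ⟨r, hwo⟩ := exists_wellFoundedLT X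
  have hne : ∀ x : X, ({y | dist x y < ε} : Set X).Nonempty := fun x => ⟨x, by simpa using hε⟩
  let f : X → X := fun x => (wellFounded_lt (α := X)).min _ (hne x)
  have hf : ∀ x, dist x (f x) < ε := fun x => (wellFounded_lt (α := X)).min_mem _ (hne x)
  have hmin : ∀ x y, dist x y < ε → f x ≤ y := fun x y h =>
    not_lt.1 ((wellFounded_lt (α := X)).not_lt_min _ h)
  refine ⟨f, hf, fun S => ?_⟩
  let D : ℕ → X → Set X := fun n y =>
    {x | dist x y ≤ ε - 1 / ((n : ℝ) + 1)} ∩ ⋂ y' : {y' // y' < y}, {x | ε ≤ dist x y'}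
  have hDc : ∀ n y, IsClosed (D n y) := fun n y => by
    refine IsClosed.inter (isClosed_le (by fun_prop) (by fun_prop)) ?_
    exact isClosed_iInter fun y' => isClosed_le (by fun_prop) (by fun_prop)
  have hDf : ∀ n y x, x ∈ D n y → f x = y := by
    intro n y x hx
    have hp : 0 < 1 / ((n : ℝ) + 1) := by positivity
    refine le_antisymm (hmin x y (by have := hx.1; simp only [mem_ofPred_eq] at this; linarith)) ?_
    by_contra hlt
    have h2 := mem_iInter.1 hx.2 ⟨f x, not_le.1 hlt⟩
    exact absurd (hf x) (not_lt.2 h2)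
  have hE : f ⁻¹' S = ⋃ n : ℕ, ⋃ y ∈ S, D n y := by
    ext x
    simp only [mem_preimage, mem_iUnion, exists_prop]
    constructor
    · intro hx
      obtain ⟨n, hn⟩ := exists_nat_one_div_lt (sub_pos.2 (hf x))
      refine ⟨n, f x, hx, ?_, mem_iInter.2 ?_⟩
      · simp only [mem_ofPred_eq]; linarith
      · rintro ⟨y', hy'⟩
        by_contra hlt
        exact absurd (hmin x y' (not_le.1 hlt)) (not_le.2 hy')
    · rintro ⟨n, y, hy, hx⟩
      rw [hDf n y x hx]; exact hy
  rw [hE]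
  refine MeasurableSet.iUnion fun n => IsClosed.measurableSet ?_
  have hp : 0 < 1 / ((n : ℝ) + 1) := by positivity
  have hsep : ∀ y y' x x', x ∈ D n y → x' ∈ D n y' → y < y' → 1 / ((n : ℝ) + 1) ≤ dist x x' := by
    intro y y' x x' hx hx' hlt
    have h1 : dist x y ≤ ε - 1 / ((n : ℝ) + 1) := hx.1
    have h2 : ε ≤ dist x' y := mem_iInter.1 hx'.2 ⟨y, hlt⟩
    have h3 := dist_triangle x' x y
    rw [dist_comm x' x] at h3
    linarith
  have hsep' : ∀ y y' x x', x ∈ D n y → x' ∈ D n y' → dist x x' < 1 / ((n : ℝ) + 1) → y = y' := by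
    intro y y' x x' hx hx' hd
    rcases lt_trichotomy y y' with h | h | h
    · exact absurd hd (not_lt.2 (hsep _ _ _ _ hx hx' h))
    · exact h
    · rw [dist_comm] at hd
      exact absurd hd (not_lt.2 (hsep _ _ _ _ hx' hx h))
  rw [← closure_subset_iff_isClosed]
  intro z hz
  rw [Metric.mem_closure_iff] at hz
  obtain ⟨b, hb, hzb⟩ := hz (1 / ((n : ℝ) + 1) / 2) (by positivity)
  simp only [mem_iUnion, exists_prop] at hb ⊢
  obtain ⟨y, hy, hby⟩ := hb
  refine ⟨y, hy, ?_⟩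
  rw [← (hDc n y).closure_eq, Metric.mem_closure_iff]
  intro δ hδ
  obtain ⟨b', hb', hzb'⟩ := hz (min δ (1 / ((n : ℝ) + 1) / 2)) (by positivity)
  simp only [mem_iUnion, exists_prop] at hb'
  obtain ⟨y', hy', hby'⟩ := hb'
  have : y = y' := by
    refine hsep' _ _ _ _ hby hby' ?_
    have := dist_triangle_left b b' z
    have h5 := lt_of_lt_of_le hzb' (min_le_right _ _)
    linarith
  subst this
  exact ⟨b', hby', lt_of_lt_of_le hzb' (min_le_left _ _)⟩

open ProbabilityTheory in
/-- Conditional law of `φ` given the first coordinate. -/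
noncomputable def tk {ι α : Type*} [MeasurableSpace ι] [MeasurableSpace α]
    (π : Measure (ι × α)) [IsProbabilityMeasure π] (φ : α → ℝ) : Kernel ι ℝ :=
  (π.map (Prod.map id φ)).condKernel

instance tk_markov {ι α : Type*} [MeasurableSpace ι] [MeasurableSpace α]
    (π : Measure (ι × α)) [IsProbabilityMeasure π] (φ : α → ℝ) :
    ProbabilityTheory.IsMarkovKernel (tk π φ) := by
  unfold tk; infer_instance

theorem fst_map_aux {ι α β : Type*} [MeasurableSpace ι] [MeasurableSpace α] [MeasurableSpace β]
    (π : Measure (ι × α)) (φ : α → β) (hφ : Measurable φ) :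
    (π.map (Prod.map id φ)).fst = π.fst := by
  rw [Measure.fst, Measure.map_map measurable_fst (measurable_id.prodMap hφ)]
  rfl

theorem tk_compProd {ι α : Type*} [MeasurableSpace ι] [MeasurableSpace α]
    (π : Measure (ι × α)) [IsProbabilityMeasure π] (φ : α → ℝ) (hφ : Measurable φ) :
    π.fst.compProd (tk π φ) = π.map (Prod.map id φ) := by
  rw [← fst_map_aux π φ hφ]
  unfold tk
  exact Measure.disintegrate _ _

theorem tk_comp {ι α : Type*} [MeasurableSpace ι] [MeasurableSpace α]
    (π : Measure (ι × α)) [IsProbabilityMeasure π] (φ : α → ℝ) (hφ : Measurable φ)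
    (g : ℝ → ℝ) (hg : Measurable g) :
    ∀ᵐ i ∂π.fst, (tk π φ i).map g = tk π (g ∘ φ) i := by
  have hk : ProbabilityTheory.IsMarkovKernel ((tk π φ).map g) :=
    ProbabilityTheory.Kernel.IsMarkovKernel.map _ hg
  have key := ProbabilityTheory.eq_condKernel_of_measure_eq_compProd
    (ρ := π.map (Prod.map id (g ∘ φ))) ((tk π φ).map g) (by
      rw [fst_map_aux π _ (hg.comp hφ), Measure.compProd_map hg, tk_compProd π φ hφ,
        Measure.map_map (measurable_id.prodMap hg) (measurable_id.prodMap hφ)]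
      rfl)
  rw [fst_map_aux π _ (hg.comp hφ)] at key
  filter_upwards [key] with i hi
  rw [← ProbabilityTheory.Kernel.map_apply _ hg, hi]
  rfl

/-- Conditionally independent joint law of `φ` and `ψ`. -/
noncomputable def jointV {ι α β : Type*} [MeasurableSpace ι] [MeasurableSpace α]
    [MeasurableSpace β] (π₁ : Measure (ι × α)) [IsProbabilityMeasure π₁]
    (π₂ : Measure (ι × β)) [IsProbabilityMeasure π₂] (φ : α → ℝ) (ψ : β → ℝ) :
    Measure (ℝ × ℝ) :=
  π₁.fst.bind (fun i => (tk π₁ φ i).prod (tk π₂ ψ i))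

section core
variable {ι α β : Type*} [MeasurableSpace ι] [DiscreteMeasurableSpace ι] [MeasurableSpace α]
    [MeasurableSpace β] (π₁ : Measure (ι × α)) [IsProbabilityMeasure π₁]
    (π₂ : Measure (ι × β)) [IsProbabilityMeasure π₂]

theorem jointV_lintegral (φ : α → ℝ) (ψ : β → ℝ) {h : ℝ × ℝ → ℝ≥0∞} (hh : Measurable h) :
    ∫⁻ p, h p ∂(jointV π₁ π₂ φ ψ) =
      ∫⁻ i, ∫⁻ p, h p ∂((tk π₁ φ i).prod (tk π₂ ψ i)) ∂π₁.fst :=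
  Measure.lintegral_bind (Measurable.of_discrete).aemeasurable hh.aemeasurable

theorem tk_lowN_le (φ : α → ℝ) (hφ : Measurable φ) (c : ι → α → ℝ≥0∞) :
    lowN π₁.fst (fun i => lowN (tk π₁ φ i) (fun s => ⨅ x, ⨅ (_ : φ x = s), c i x)) ≤
      lowN π₁ (fun p => c p.1 p.2) := by
  rw [lowN, lowN]
  simp only [lowN_sq]
  refine ENNReal.rpow_le_rpow ?_ (by norm_num)
  refine (lintegral_lintegral_le π₁.fst (tk π₁ φ)
    (fun i s => (⨅ x, ⨅ (_ : φ x = s), c i x) ^ (2 : ℝ))).trans ?_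
  rw [tk_compProd π₁ φ hφ]
  refine (lintegral_map_le _ _).trans (lintegral_mono fun p => ?_)
  refine ENNReal.rpow_le_rpow ?_ (by norm_num)
  exact iInf₂_le (f := fun x (_ : φ x = φ p.2) => c p.1 x) p.2 rfl

theorem jointV_bound (h12 : π₁.fst = π₂.fst) (φ : α → ℝ) (hφ : Measurable φ)
    (ψ : β → ℝ) (hψ : Measurable ψ) {h : ℝ × ℝ → ℝ≥0∞} (hh : Measurable h)
    (c₁ : ι → α → ℝ≥0∞) (c₂ : ι → β → ℝ≥0∞)
    (hle : ∀ i x z, h (φ x, ψ z) ≤ c₁ i x + c₂ i z) :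
    lowN (jointV π₁ π₂ φ ψ) h ≤
      lowN π₁ (fun p => c₁ p.1 p.2) + lowN π₂ (fun p => c₂ p.1 p.2) := by
  have e : lowN (jointV π₁ π₂ φ ψ) h =
      lowN π₁.fst (fun i => lowN ((tk π₁ φ i).prod (tk π₂ ψ i)) h) := by
    rw [lowN, lowN, jointV_lintegral π₁ π₂ φ ψ (hh.pow_const _)]
    simp only [lowN_sq]
  rw [e]
  refine (lowN_mono _ (g := (fun i => lowN (tk π₁ φ i) (fun s => ⨅ x, ⨅ (_ : φ x = s), c₁ i x)) +
    (fun i => lowN (tk π₂ ψ i) (fun s => ⨅ x, ⨅ (_ : ψ x = s), c₂ i x))) fun i => ?_).trans ?_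
  · refine lowN_prod_le _ _ hh fun s t => ?_
    simp only [ENNReal.iInf_add, ENNReal.add_iInf]
    refine le_iInf fun x => le_iInf fun hx => le_iInf fun z => le_iInf fun hz => ?_
    subst hx hz
    exact hle i z x
  · refine (ENNReal.lintegral_Lp_add_le (Measurable.of_discrete).aemeasurable
      (Measurable.of_discrete).aemeasurable (by norm_num)).trans ?_
    refine add_le_add (tk_lowN_le π₁ φ hφ c₁) ?_
    rw [h12]
    exact tk_lowN_le π₂ ψ hψ c₂

theorem jointV_null (h12 : π₁.fst = π₂.fst) (φ : α → ℝ) (hφ : Measurable φ)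
    (ψ : β → ℝ) (hψ : Measurable ψ) {E : Set (ℝ × ℝ)} (hE : MeasurableSet E)
    (h0 : ∀ x z, (φ x, ψ z) ∉ E) : jointV π₁ π₂ φ ψ E = 0 := by
  have := jointV_bound π₁ π₂ h12 φ hφ ψ hψ (h := E.indicator 1) (measurable_one.indicator hE)
    (fun _ _ => 0) (fun _ _ => 0) (fun i x z => by simp [h0 x z])
  have e : ∀ p, (E.indicator (1 : ℝ × ℝ → ℝ≥0∞) p) ^ (2 : ℝ) = E.indicator 1 p := fun p => by
    by_cases hp : p ∈ E <;> simp [hp]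
  simp only [lowN, e, lintegral_indicator_one hE] at this
  norm_num at this
  exact this

theorem jointV_map (h12 : π₁.fst = π₂.fst) (φ : α → ℝ) (hφ : Measurable φ)
    (ψ : β → ℝ) (hψ : Measurable ψ) (g g' : ℝ → ℝ) (hg : Measurable g) (hg' : Measurable g') :
    (jointV π₁ π₂ φ ψ).map (Prod.map g g') = jointV π₁ π₂ (g ∘ φ) (g' ∘ ψ) := by
  ext E hE
  rw [Measure.map_apply (hg.prodMap hg') hE, jointV, jointV,
    Measure.bind_apply (hg.prodMap hg' hE) (Measurable.of_discrete).aemeasurable,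
    Measure.bind_apply hE (Measurable.of_discrete).aemeasurable]
  have h2 := tk_comp π₂ ψ hψ g' hg'
  rw [← h12] at h2
  refine lintegral_congr_ae ?_
  filter_upwards [tk_comp π₁ φ hφ g hg, h2] with i h1 h2
  rw [← h1, ← h2, Measure.map_prod_map _ _ hg hg', Measure.map_apply (hg.prodMap hg') hE]

/-- countably many real functions factor through one. -/
theorem exists_joint {γ : Type*} [MeasurableSpace γ] (φ : ℕ → γ → ℝ) (hφ : ∀ n, Measurable (φ n)) :
    ∃ Φ : γ → ℝ, Measurable Φ ∧ ∀ n, ∃ g : ℝ → ℝ, Measurable g ∧ φ n = g ∘ Φ := by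
  have he := measurableEmbedding_embeddingReal (ℕ → ℝ)
  refine ⟨fun x => embeddingReal (ℕ → ℝ) (fun n => φ n x),
    he.measurable.comp (measurable_pi_lambda _ hφ), fun n => ?_⟩
  refine ⟨fun y => he.invFun y n, (measurable_pi_apply n).comp he.measurable_invFun, ?_⟩
  ext x
  simp only [Function.comp]
  rw [he.leftInverse_invFun]

/-- `E` is determined by `(φ, ψ)`. -/
def Codes (φ : α → ℝ) (ψ : β → ℝ) (E : Set (α × β)) (E' : Set (ℝ × ℝ)) : Prop :=
  Measurable φ ∧ Measurable ψ ∧ MeasurableSet E' ∧ E = Prod.map φ ψ ⁻¹' E'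

theorem codes_joint (E : ℕ → Set (α × β)) (h : ∀ n, ∃ φ ψ E', Codes φ ψ (E n) E') :
    ∃ φ ψ, ∃ E' : ℕ → Set (ℝ × ℝ), ∀ n, Codes φ ψ (E n) (E' n) := by
  choose φ ψ E' hc using h
  obtain ⟨Φ, hΦ, hg⟩ := exists_joint φ (fun n => (hc n).1)
  obtain ⟨Ψ, hΨ, hg'⟩ := exists_joint ψ (fun n => (hc n).2.1)
  choose g hgm hge using hg
  choose g' hgm' hge' using hg'
  refine ⟨Φ, Ψ, fun n => Prod.map (g n) (g' n) ⁻¹' E' n, fun n => ⟨hΦ, hΨ,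
    ((hgm n).prodMap (hgm' n)) (hc n).2.2.1, ?_⟩⟩
  rw [(hc n).2.2.2, hge n, hge' n]
  rfl

theorem codes_exists (E : Set (α × β)) (hE : MeasurableSet E) :
    ∃ φ ψ E', Codes φ ψ E E' := by
  classical
  have hg := generateFrom_prod (α := α) (β := β)
  induction E, hE using MeasurableSpace.induction_on_inter (hg.symm) isPiSystem_prod with
  | empty => exact ⟨fun _ => 0, fun _ => 0, ∅, measurable_const, measurable_const, .empty, rfl⟩
  | basic s hs =>
    obtain ⟨A, hA, B, hB, rfl⟩ := hs
    refine ⟨A.indicator 1, B.indicator 1, {1} ×ˢ {1}, measurable_one.indicator hA,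
      measurable_one.indicator hB, (measurableSet_singleton _).prod (measurableSet_singleton _), ?_⟩
    ext ⟨x, z⟩
    by_cases hx : x ∈ A <;> by_cases hz : z ∈ B <;> simp [hx, hz]
  | compl s hs ih =>
    obtain ⟨φ, ψ, E', h1, h2, h3, h4⟩ := ih
    exact ⟨φ, ψ, E'ᶜ, h1, h2, h3.compl, by rw [h4]; rfl⟩
  | iUnion f _ _ ih =>
    obtain ⟨φ, ψ, E', h⟩ := codes_joint f ih
    refine ⟨φ, ψ, ⋃ n, E' n, (h 0).1, (h 0).2.1, .iUnion fun n => (h n).2.2.1, ?_⟩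
    rw [preimage_iUnion]
    exact iUnion_congr fun n => (h n).2.2.2

theorem jointV_congr (h12 : π₁.fst = π₂.fst) {φ : α → ℝ} {ψ : β → ℝ} {E : Set (α × β)}
    {E' F' : Set (ℝ × ℝ)} (hE : Codes φ ψ E E') (hF : Codes φ ψ E F') :
    jointV π₁ π₂ φ ψ E' = jointV π₁ π₂ φ ψ F' := by
  obtain ⟨h1, h2, h3, h4⟩ := hE
  obtain ⟨-, -, h5, h6⟩ := hF
  have hiff : ∀ x z, (φ x, ψ z) ∈ E' ↔ (φ x, ψ z) ∈ F' := fun x z => by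
    have := h4.symm.trans h6
    exact Set.ext_iff.1 this (x, z)
  refine measure_congr (ae_eq_set.2 ⟨?_, ?_⟩)
  · exact jointV_null π₁ π₂ h12 φ h1 ψ h2 (h3.diff h5) fun x z h => h.2 ((hiff x z).1 h.1)
  · exact jointV_null π₁ π₂ h12 φ h1 ψ h2 (h5.diff h3) fun x z h => h.2 ((hiff x z).2 h.1)

theorem jointV_congr' (h12 : π₁.fst = π₂.fst) {φ φ₂ : α → ℝ} {ψ ψ₂ : β → ℝ} {E : Set (α × β)}
    {E' F' : Set (ℝ × ℝ)} (hE : Codes φ ψ E E') (hF : Codes φ₂ ψ₂ E F') :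
    jointV π₁ π₂ φ ψ E' = jointV π₁ π₂ φ₂ ψ₂ F' := by
  obtain ⟨Φ, hΦ, hg⟩ := exists_joint (fun n : ℕ => if n = 0 then φ else φ₂)
    (fun n => by split_ifs; exacts [hE.1, hF.1])
  obtain ⟨Ψ, hΨ, hg'⟩ := exists_joint (fun n : ℕ => if n = 0 then ψ else ψ₂)
    (fun n => by split_ifs; exacts [hE.2.1, hF.2.1])
  obtain ⟨g0, hg0, e0⟩ := hg 0
  obtain ⟨g1, hg1, e1⟩ := hg 1
  obtain ⟨k0, hk0, f0⟩ := hg' 0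
  obtain ⟨k1, hk1, f1⟩ := hg' 1
  simp only [if_true, one_ne_zero, if_false] at e0 e1 f0 f1
  obtain ⟨-, -, h3, h4⟩ := hE
  obtain ⟨-, -, h5, h6⟩ := hF
  subst e0 e1 f0 f1
  rw [← jointV_map π₁ π₂ h12 Φ hΦ Ψ hΨ _ _ hg0 hk0, ← jointV_map π₁ π₂ h12 Φ hΦ Ψ hΨ _ _ hg1 hk1,
    Measure.map_apply (hg0.prodMap hk0) h3, Measure.map_apply (hg1.prodMap hk1) h5]
  exact jointV_congr π₁ π₂ h12 (E := E) ⟨hΦ, hΨ, hg0.prodMap hk0 h3, h4⟩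
    ⟨hΦ, hΨ, hg1.prodMap hk1 h5, h6⟩

theorem exists_glue (h12 : π₁.fst = π₂.fst) :
    ∃ γ : Measure (α × β), ∀ φ ψ E E', Codes φ ψ E E' → γ E = jointV π₁ π₂ φ ψ E' := by
  choose φ ψ E' hc using codes_exists (α := α) (β := β)
  have key : ∀ E hE φ₂ ψ₂ F', Codes φ₂ ψ₂ E F' →
      jointV π₁ π₂ (φ E hE) (ψ E hE) (E' E hE) = jointV π₁ π₂ φ₂ ψ₂ F' :=
    fun E hE φ₂ ψ₂ F' h => jointV_congr' π₁ π₂ h12 (hc E hE) h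
  refine ⟨Measure.ofMeasurable (fun E hE => jointV π₁ π₂ (φ E hE) (ψ E hE) (E' E hE)) ?_ ?_, ?_⟩
  · rw [key ∅ .empty (fun _ => 0) (fun _ => 0) ∅
      ⟨measurable_const, measurable_const, .empty, rfl⟩, measure_empty]
  · intro f hf hd
    obtain ⟨Φ, Ψ, F', hF⟩ := codes_joint f (fun n => codes_exists _ (hf n))
    have hU : Codes Φ Ψ (⋃ n, f n) (⋃ n, F' n) := by
      refine ⟨(hF 0).1, (hF 0).2.1, .iUnion fun n => (hF n).2.2.1, ?_⟩
      rw [preimage_iUnion]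
      exact iUnion_congr fun n => (hF n).2.2.2
    rw [key _ _ _ _ _ hU]
    simp_rw [fun n => key _ (hf n) _ _ _ (hF n)]
    refine measure_iUnion₀ (fun m n hmn => ?_) fun n => (hF n).2.2.1.nullMeasurableSet
    refine jointV_null π₁ π₂ h12 Φ (hF 0).1 Ψ (hF 0).2.1
      ((hF m).2.2.1.inter (hF n).2.2.1) fun x z h => ?_
    have h1 : (x, z) ∈ f m := by rw [(hF m).2.2.2]; exact h.1
    have h2 : (x, z) ∈ f n := by rw [(hF n).2.2.2]; exact h.2
    exact (Set.disjoint_left.1 (hd hmn)) h1 h2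
  · intro φ₂ ψ₂ E F' h
    have hE : MeasurableSet E := by
      rw [h.2.2.2]; exact (h.1.prodMap h.2.1) h.2.2.1
    rw [Measure.ofMeasurable_apply _ hE]
    exact key _ _ _ _ _ h

theorem jointV_fst (φ : α → ℝ) (hφ : Measurable φ) (ψ : β → ℝ) {A : Set ℝ}
    (hA : MeasurableSet A) : jointV π₁ π₂ φ ψ (A ×ˢ univ) = π₁.snd (φ ⁻¹' A) := by
  rw [jointV, Measure.bind_apply (hA.prod .univ) (Measurable.of_discrete).aemeasurable]
  have := congrArg (fun m => m (univ ×ˢ A)) (tk_compProd π₁ φ hφ)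
  rw [Measure.compProd_apply_prod .univ hA, Measure.map_apply (measurable_id.prodMap hφ)
    (MeasurableSet.univ.prod hA)] at this
  simp only [Measure.prod_prod, measure_univ, mul_one]
  rw [Measure.restrict_univ] at this
  rw [this, Measure.snd_apply (hφ hA)]
  congr 1
  ext ⟨i, x⟩; simp

theorem jointV_snd (h12 : π₁.fst = π₂.fst) (φ : α → ℝ) (ψ : β → ℝ) (hψ : Measurable ψ) {A : Set ℝ}
    (hA : MeasurableSet A) : jointV π₁ π₂ φ ψ (univ ×ˢ A) = π₂.snd (ψ ⁻¹' A) := by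
  rw [jointV, Measure.bind_apply (MeasurableSet.univ.prod hA)
    (Measurable.of_discrete).aemeasurable]
  have := congrArg (fun m => m (univ ×ˢ A)) (tk_compProd π₂ ψ hψ)
  rw [Measure.compProd_apply_prod .univ hA, Measure.map_apply (measurable_id.prodMap hψ)
    (MeasurableSet.univ.prod hA)] at this
  simp only [Measure.prod_prod, measure_univ, one_mul]
  rw [Measure.restrict_univ, ← h12] at this
  rw [this, Measure.snd_apply (hψ hA)]
  congr 1
  ext ⟨i, x⟩; simp

/-- Gluing with discrete middle space. -/
theorem glue (h12 : π₁.fst = π₂.fst) (c : α × β → ℝ≥0∞)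
    (c₁ : ι → α → ℝ≥0∞) (c₂ : ι → β → ℝ≥0∞) (hle : ∀ i x z, c (x, z) ≤ c₁ i x + c₂ i z) :
    ∃ γ : Measure (α × β), γ.fst = π₁.snd ∧ γ.snd = π₂.snd ∧
      lowN γ c ≤ lowN π₁ (fun p => c₁ p.1 p.2) + lowN π₂ (fun p => c₂ p.1 p.2) := by
  obtain ⟨γ, hγ⟩ := exists_glue π₁ π₂ h12
  have hind : ∀ {δ : Type _} (S : Set δ), (S.indicator (1 : δ → ℝ)) ⁻¹' {1} = S := by
    intro δ S
    ext x
    by_cases hx : x ∈ S <;> simp [hx]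
  have hind' : ∀ {δ : Type _} (S : Set δ), (S.indicator (1 : δ → ℝ)) ⁻¹' {1} = S := by
    intro δ S
    ext x
    by_cases hx : x ∈ S <;> simp [hx]
  refine ⟨γ, ?_, ?_, ?_⟩
  · ext S hS
    have hm : Measurable (S.indicator (1 : α → ℝ)) := measurable_one.indicator hS
    rw [Measure.fst_apply hS, hγ (S.indicator 1) (fun _ => 0) _ ({1} ×ˢ univ)
      ⟨hm, measurable_const, (measurableSet_singleton _).prod .univ, ?_⟩,
      jointV_fst π₁ π₂ _ hm _ (measurableSet_singleton _), hind S]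
    nth_rewrite 1 [← hind S]
    ext ⟨x, z⟩; simp
  · ext S hS
    have hm : Measurable (S.indicator (1 : β → ℝ)) := measurable_one.indicator hS
    rw [Measure.snd_apply hS, hγ (fun _ => 0) (S.indicator 1) _ (univ ×ˢ {1})
      ⟨measurable_const, hm, MeasurableSet.univ.prod (measurableSet_singleton _), ?_⟩,
      jointV_snd π₁ π₂ h12 _ _ hm (measurableSet_singleton _), hind' S]
    nth_rewrite 1 [← hind' S]
    ext ⟨x, z⟩; simp
  · obtain ⟨h, hh, hhc, he⟩ := lowN_exists γ c
    rw [he]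
    obtain ⟨e, he'⟩ := exists_surjective_nat ℚ
    let v : ℕ → ℝ≥0∞ := fun n => (((e n : ℝ).toNNReal : NNReal) : ℝ≥0∞)
    obtain ⟨φ, ψ, E', hE⟩ := codes_joint (fun n => {p | v n < h p})
      (fun n => codes_exists _ (measurableSet_lt measurable_const hh))
    let h' : ℝ × ℝ → ℝ≥0∞ := fun p => ⨆ n, (E' n).indicator (fun _ => v n) p
    have hh' : Measurable h' := Measurable.iSup fun n => measurable_const.indicator (hE n).2.2.1
    have hcomp : ∀ p : α × β, h' (Prod.map φ ψ p) = h p := by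
      intro p
      have hiff : ∀ n, Prod.map φ ψ p ∈ E' n ↔ v n < h p := fun n => by
        have := Set.ext_iff.1 (hE n).2.2.2 p
        exact this.symm
      apply le_antisymm
      · refine iSup_le fun n => ?_
        by_cases hn : Prod.map φ ψ p ∈ E' n
        · rw [indicator_of_mem hn]; exact ((hiff n).1 hn).le
        · rw [indicator_of_notMem hn]; exact zero_le
      · refine le_of_forall_lt fun r hr => ?_
        obtain ⟨q, _, h1, h2⟩ := ENNReal.lt_iff_exists_rat_btwn.1 hr
        obtain ⟨n, rfl⟩ := he' q
        refine h1.trans_le ?_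
        refine le_trans ?_ (le_iSup (fun n => (E' n).indicator (fun _ => v n) (Prod.map φ ψ p)) n)
        rw [indicator_of_mem ((hiff n).2 h2)]
    have hφ := (hE 0).1
    have hψ := (hE 0).2.1
    have hmap : γ.map (Prod.map φ ψ) = jointV π₁ π₂ φ ψ := by
      ext S hS
      rw [Measure.map_apply (hφ.prodMap hψ) hS]
      exact hγ _ _ _ _ ⟨hφ, hψ, hS, rfl⟩
    have e2 : lowN γ h = lowN (jointV π₁ π₂ φ ψ) h' := by
      rw [← hmap, lowN, lowN, lintegral_map (hh'.pow_const _) (hφ.prodMap hψ)]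
      simp only [hcomp]
    rw [e2]
    refine jointV_bound π₁ π₂ h12 φ hφ ψ hψ hh' c₁ c₂ fun i x z => ?_
    have := hcomp (x, z)
    simp only [Prod.map_apply] at this
    rw [this]
    exact (hhc _).trans (hle i x z)

end core

/-- `X` with all subsets measurable. -/
def Disc (X : Type*) : Type _ := X

instance (X : Type*) : MeasurableSpace (Disc X) := ⊤

instance (X : Type*) : DiscreteMeasurableSpace (Disc X) := ⟨fun _ => trivial⟩

theorem cost_eq {X : Type*} [MetricSpace X] (x y : X) :
    ENNReal.ofReal (dist x y ^ 2) = edist x y ^ (2 : ℝ) := by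
  rw [edist_dist, ENNReal.ofReal_pow dist_nonneg]
  norm_num

theorem W2_eq {X : Type*} [MetricSpace X] [MeasurableSpace X] (μ ν : Measure X) :
    W2 μ ν = ⨅ (π : Measure (X × X)) (_ : IsCoupling π μ ν), lowN π (fun p => edist p.1 p.2) := by
  have h : ∀ x : ℝ≥0∞, x ^ (1 / 2 : ℝ) = ENNReal.orderIsoRpow (1 / 2 : ℝ) (by norm_num) x :=
    fun x => rfl
  simp only [W2, W2sq, lowN, cost_eq, h, OrderIso.map_iInf]

theorem IsCoupling.prob {X : Type*} [MetricSpace X] [MeasurableSpace X] {π : Measure (X × X)}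
    {μ ν : Measure X} [IsProbabilityMeasure μ] (h : IsCoupling π μ ν) :
    IsProbabilityMeasure π := by
  constructor
  have := measure_univ (μ := μ)
  rw [← h.1, Measure.map_apply measurable_fst .univ] at this
  simpa using this

theorem coupling_triangle {X : Type*} [MetricSpace X] [MeasurableSpace X] [BorelSpace X]
    {μ ν ρ : Measure X} [IsProbabilityMeasure μ] [IsProbabilityMeasure ν]
    {πa πb : Measure (X × X)} (ha : IsCoupling πa μ ν) (hb : IsCoupling πb ν ρ)
    (ε : ℝ) (hε : 0 < ε) :
    W2 μ ρ ≤ (lowN πa (fun p => edist p.1 p.2) + ENNReal.ofReal ε) +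
      (lowN πb (fun p => edist p.1 p.2) + ENNReal.ofReal ε) := by
  have := ha.prob
  have := hb.prob
  obtain ⟨f, hf, hfm⟩ := exists_discretization (X := X) ε hε
  let F : X → Disc X := f
  have hF : Measurable F := fun S _ => hfm S
  let Ga : X × X → Disc X × X := fun p => (F p.2, p.1)
  let Gb : X × X → Disc X × X := fun p => (F p.1, p.2)
  have hGa : Measurable Ga := (hF.comp measurable_snd).prodMk measurable_fst
  have hGb : Measurable Gb := (hF.comp measurable_fst).prodMk measurable_snd
  have i1 : IsProbabilityMeasure (πa.map Ga) := Measure.isProbabilityMeasure_map hGa.aemeasurable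
  have i2 : IsProbabilityMeasure (πb.map Gb) := Measure.isProbabilityMeasure_map hGb.aemeasurable
  have h12 : (πa.map Ga).fst = (πb.map Gb).fst := by
    rw [Measure.fst, Measure.fst, Measure.map_map measurable_fst hGa,
      Measure.map_map measurable_fst hGb]
    change πa.map (F ∘ Prod.snd) = πb.map (F ∘ Prod.fst)
    rw [← Measure.map_map hF measurable_snd, ← Measure.map_map hF measurable_fst, ha.2, hb.1]
  let D : Disc X → X := fun i => i
  obtain ⟨γ, h1, h2, h3⟩ := glue (πa.map Ga) (πb.map Gb) h12 (fun p => edist p.1 p.2)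
    (fun i x => edist x (D i)) (fun i z => edist (D i) z) (fun i x z => edist_triangle _ _ _)
  have hed : ∀ x, edist x (f x) ≤ ENNReal.ofReal ε := fun x => by
    rw [edist_dist]; exact ENNReal.ofReal_le_ofReal (hf x).le
  have hγ : IsCoupling γ μ ρ := by
    constructor
    · change γ.fst = μ
      rw [h1, Measure.snd, Measure.map_map measurable_snd hGa]
      exact ha.1
    · change γ.snd = ρ
      rw [h2, Measure.snd, Measure.map_map measurable_snd hGb]
      exact hb.2
  rw [W2_eq]
  refine (iInf₂_le γ hγ).trans (h3.trans (add_le_add ?_ ?_))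
  · refine le_trans ?_ (lowN_le_add_const πa (f := fun p => edist p.1 (f p.2)) fun p => ?_)
    · exact ENNReal.rpow_le_rpow (lintegral_map_le _ _) (by norm_num)
    · refine (edist_triangle _ p.2 _).trans ?_
      gcongr
      exact hed _
  · refine le_trans ?_ (lowN_le_add_const πb (f := fun p => edist (f p.1) p.2) fun p => ?_)
    · exact ENNReal.rpow_le_rpow (lintegral_map_le _ _) (by norm_num)
    · refine (edist_triangle _ p.1 _).trans ?_
      rw [add_comm]
      gcongr
      rw [edist_comm]
      exact hed _

theorem W2_triangle {X : Type*} [MetricSpace X] [MeasurableSpace X] [BorelSpace X]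
    (μ ν ρ : Measure X) [IsProbabilityMeasure μ] [IsProbabilityMeasure ν] :
    W2 μ ρ ≤ W2 μ ν + W2 ν ρ := by
  rw [W2_eq μ ν, W2_eq ν ρ]
  simp only [ENNReal.iInf_add, ENNReal.add_iInf]
  refine le_iInf fun πb => le_iInf fun hb => le_iInf fun πa => le_iInf fun ha => ?_
  refine ENNReal.le_of_forall_pos_le_add fun ε hε _ => ?_
  have hε' : (0 : ℝ) < ε / 2 := by positivity
  refine (coupling_triangle ha hb (ε / 2) hε').trans (le_of_eq ?_)
  have : (ε : ℝ≥0∞) = ENNReal.ofReal (ε / 2) + ENNReal.ofReal (ε / 2) := by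
    rw [← ENNReal.ofReal_add hε'.le hε'.le, add_halves, ENNReal.ofReal_coe_nnreal]
  rw [this]
  ring

theorem W2_symm {X : Type*} [MetricSpace X] [MeasurableSpace X] (μ ν : Measure X) :
    W2 μ ν = W2 ν μ := by
  have key : ∀ μ ν : Measure X, W2 μ ν ≤ W2 ν μ := by
    intro μ ν
    rw [W2_eq, W2_eq]
    refine le_iInf₂ fun π hπ => ?_
    have hc : IsCoupling (π.map Prod.swap) μ ν :=
      ⟨by rw [Measure.map_map measurable_fst measurable_swap]; exact hπ.2,
        by rw [Measure.map_map measurable_snd measurable_swap]; exact hπ.1⟩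
    refine (iInf₂_le (f := fun π (_ : IsCoupling π μ ν) => lowN π (fun p => edist p.1 p.2))
      (π.map Prod.swap) hc).trans ?_
    unfold lowN
    refine ENNReal.rpow_le_rpow ((lintegral_map_le _ _).trans ?_) (by norm_num)
    refine lintegral_mono fun p => ?_
    change edist p.2 p.1 ^ (2 : ℝ) ≤ edist p.1 p.2 ^ (2 : ℝ)
    rw [edist_comm]
  exact le_antisymm (key _ _) (key _ _)

theorem W2_ne_top {X : Type*} [MetricSpace X] [MeasurableSpace X] [BorelSpace X] (x₀ : X)
    (μ ν : Measure X) (h₀ : InP2 μ x₀) (h₁ : InP2 ν x₀) : W2 μ ν ≠ ⊤ := by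
  have := h₀.1
  have := h₁.1
  have hc : IsCoupling (μ.prod ν) μ ν := by
    constructor
    · simpa using Measure.map_fst_prod (μ := μ) (ν := ν)
    · simpa using Measure.map_snd_prod (μ := μ) (ν := ν)
  have hm : Measurable (fun x : X => edist x₀ x) := measurable_edist_right
  rw [W2_eq]
  refine ne_top_of_le_ne_top ?_
    (iInf₂_le (f := fun π (_ : IsCoupling π μ ν) => lowN π (fun p => edist p.1 p.2))
      (μ.prod ν) hc)
  have hfin : ∀ m : Measure X, FiniteSecondMoment m x₀ → lowN m (fun x => edist x₀ x) ≠ ⊤ := by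
    intro m h
    unfold FiniteSecondMoment at h
    simp only [cost_eq] at h
    exact ENNReal.rpow_ne_top_of_nonneg (by norm_num) h.ne
  refine ne_top_of_le_ne_top (ENNReal.add_ne_top.2 ⟨hfin μ h₀.2, hfin ν h₁.2⟩)
    (le_trans (lowN_mono _ (g := fun p => edist x₀ p.1 + edist x₀ p.2) fun p => ?_)
      (lowN_prod_le μ ν (by fun_prop) fun s t => le_rfl))
  exact edist_triangle_left _ _ _

theorem W2sq_convex {X : Type*} [MetricSpace X] [MeasurableSpace X]
    (μ ν₀ ν₁ : Measure X) (a b : ℝ≥0∞) (hab : a + b = 1) :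
    W2sq μ (a • ν₀ + b • ν₁) ≤ a * W2sq μ ν₀ + b * W2sq μ ν₁ := by
  have ha : a ≠ ⊤ := ne_top_of_le_ne_top ENNReal.one_ne_top (hab ▸ le_self_add)
  have hb : b ≠ ⊤ := ne_top_of_le_ne_top ENNReal.one_ne_top (hab ▸ le_add_self)
  rcases eq_or_ne a 0 with rfl | ha0
  · obtain rfl : b = 1 := by simpa using hab
    simp
  rcases eq_or_ne b 0 with rfl | hb0
  · obtain rfl : a = 1 := by simpa using hab
    simp
  rw [W2sq, W2sq, W2sq]
  simp only [ENNReal.mul_iInf_of_ne ha0 ha, ENNReal.mul_iInf_of_ne hb0 hb, ENNReal.iInf_add,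
    ENNReal.add_iInf]
  refine le_iInf fun π' => le_iInf fun h' => le_iInf fun π => le_iInf fun h => ?_
  have hc : IsCoupling (a • π + b • π') μ (a • ν₀ + b • ν₁) := by
    constructor
    · rw [Measure.map_add _ _ measurable_fst, Measure.map_smul, Measure.map_smul, h.1, h'.1,
        ← add_smul, hab, one_smul]
    · rw [Measure.map_add _ _ measurable_snd, Measure.map_smul, Measure.map_smul, h.2, h'.2]
  refine (iInf₂_le (a • π + b • π') hc).trans (le_of_eq ?_)
  rw [lintegral_add_measure, lintegral_smul_measure, lintegral_smul_measure, smul_eq_mul,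
    smul_eq_mul]

theorem W2_convex_le {X : Type*} [MetricSpace X] [MeasurableSpace X]
    (μ ν₀ ν₁ : Measure X) (a b c : ℝ≥0∞) (hab : a + b = 1)
    (h₀ : W2 μ ν₀ = c) (h₁ : W2 μ ν₁ = c) : W2 μ (a • ν₀ + b • ν₁) ≤ c := by
  have e : ∀ ν, W2sq μ ν = W2 μ ν ^ (2 : ℝ) := fun ν => (half_sq _).symm
  have h := W2sq_convex μ ν₀ ν₁ a b hab
  rw [e ν₀, e ν₁, h₀, h₁, ← add_mul, hab, one_mul] at h
  calc W2 μ (a • ν₀ + b • ν₁) ≤ (c ^ (2 : ℝ)) ^ (1 / 2 : ℝ) :=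
        ENNReal.rpow_le_rpow h (by norm_num)
    _ = c := sq_half c

theorem mem_inter_of_le {X : Type*} [MetricSpace X] [MeasurableSpace X] [BorelSpace X]
    (x₀ : X) (μ₀ μ₁ : Measure X) (h₀ : InP2 μ₀ x₀) (h₁ : InP2 μ₁ x₀)
    (t : ℝ) (ht : t ∈ Ioo (0:ℝ) 1) (ν : Measure X) (hν : InP2 ν x₀)
    (ha : W2 μ₀ ν ≤ ENNReal.ofReal t * W2 μ₀ μ₁)
    (hb : W2 μ₁ ν ≤ ENNReal.ofReal (1 - t) * W2 μ₀ μ₁) : ν ∈ InterPoints t μ₀ μ₁ x₀ := by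
  have := h₀.1
  have := hν.1
  have hD := W2_ne_top x₀ μ₀ μ₁ h₀ h₁
  have htri := W2_triangle μ₀ ν μ₁
  rw [W2_symm ν μ₁] at htri
  have hsum : ENNReal.ofReal t * W2 μ₀ μ₁ + ENNReal.ofReal (1 - t) * W2 μ₀ μ₁ = W2 μ₀ μ₁ := by
    rw [← add_mul, ← ENNReal.ofReal_add ht.1.le (by linarith [ht.2])]
    simp
  have f1 : ENNReal.ofReal t * W2 μ₀ μ₁ ≠ ⊤ := ENNReal.mul_ne_top ENNReal.ofReal_ne_top hD
  have f2 : ENNReal.ofReal (1 - t) * W2 μ₀ μ₁ ≠ ⊤ := ENNReal.mul_ne_top ENNReal.ofReal_ne_top hD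
  refine ⟨hν, le_antisymm ha ?_, le_antisymm hb ?_⟩
  · refine (ENNReal.add_le_add_iff_right f2).1 ?_
    rw [hsum]
    exact htri.trans (by gcongr)
  · refine (ENNReal.add_le_add_iff_left f1).1 ?_
    rw [hsum]
    exact htri.trans (by gcongr)

theorem W2_limit_le {X : Type*} [MetricSpace X] [MeasurableSpace X] [BorelSpace X]
    (μ : Measure X) [IsProbabilityMeasure μ] (ν : ℕ → Measure X)
    (hp : ∀ n, IsProbabilityMeasure (ν n)) (c : ℝ≥0∞) (h : ∀ n, W2 μ (ν n) = c)
    (νlim : Measure X) (hlim : Tendsto (fun n => W2 (ν n) νlim) atTop (𝓝 0)) :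
    W2 μ νlim ≤ c := by
  have h2 : Tendsto (fun n => c + W2 (ν n) νlim) atTop (𝓝 (c + 0)) :=
    tendsto_const_nhds.add hlim
  rw [add_zero] at h2
  refine ge_of_tendsto' h2 fun n => ?_
  have := hp n
  rw [← h n]
  exact W2_triangle μ (ν n) νlim

/-- The set of `t`-intermediate points `ℐ_t(μ₀,μ₁)` is convex (for linear interpolation of
measures) and (sequentially) closed in `(𝒫₂(X), W₂)`. -/
theorem stmt8 {X : Type*} [MetricSpace X] [MeasurableSpace X] [BorelSpace X]
    (x₀ : X) (μ₀ μ₁ : Measure X) (h₀ : InP2 μ₀ x₀) (h₁ : InP2 μ₁ x₀)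
    (t : ℝ) (ht : t ∈ Ioo (0:ℝ) 1) :
    (∀ ν₀ ∈ InterPoints t μ₀ μ₁ x₀, ∀ ν₁ ∈ InterPoints t μ₀ μ₁ x₀, ∀ l ∈ Icc (0:ℝ) 1,
        (ENNReal.ofReal (1 - l) • ν₀ + ENNReal.ofReal l • ν₁) ∈ InterPoints t μ₀ μ₁ x₀) ∧
    (∀ ν : ℕ → Measure X, (∀ n, ν n ∈ InterPoints t μ₀ μ₁ x₀) →
      ∀ νlim : Measure X, InP2 νlim x₀ →
        Tendsto (fun n => W2 (ν n) νlim) atTop (𝓝 0) → νlim ∈ InterPoints t μ₀ μ₁ x₀) := by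
  have := h₀.1
  have := h₁.1
  constructor
  · intro ν₀ hν₀ ν₁ hν₁ l hl
    have hab : ENNReal.ofReal (1 - l) + ENNReal.ofReal l = 1 := by
      rw [← ENNReal.ofReal_add (by linarith [hl.2]) hl.1]
      simp
    refine mem_inter_of_le x₀ μ₀ μ₁ h₀ h₁ t ht _ ⟨⟨?_⟩, ?_⟩
      (W2_convex_le _ _ _ _ _ _ hab hν₀.2.1 hν₁.2.1)
      (W2_convex_le _ _ _ _ _ _ hab hν₀.2.2 hν₁.2.2)
    · have := hν₀.1.1
      have := hν₁.1.1
      simpa using hab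
    · unfold FiniteSecondMoment
      rw [lintegral_add_measure, lintegral_smul_measure, lintegral_smul_measure, smul_eq_mul,
        smul_eq_mul]
      exact ENNReal.add_lt_top.2 ⟨ENNReal.mul_lt_top ENNReal.ofReal_lt_top hν₀.1.2,
        ENNReal.mul_lt_top ENNReal.ofReal_lt_top hν₁.1.2⟩
  · intro ν hν νlim hlim htend
    exact mem_inter_of_le x₀ μ₀ μ₁ h₀ h₁ t ht _ hlim
      (W2_limit_le μ₀ ν (fun n => (hν n).1.1) _ (fun n => (hν n).2.1) νlim htend)
      (W2_limit_le μ₁ ν (fun n => (hν n).1.1) _ (fun n => (hν n).2.2) νlim htend)
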